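/- Let X be a set containing three distinct elements. For a weight structure p with p(x,x) = 0 for all x, let Δ_*(p) denote the greatest weight structure below p satisfying axioms (0) and (Δ) (equivalently, Δ_*(p)(x,y) is the infimum over all finite paths x = y_0, …, y_n = y of Σ_{i<n} p(y_i,y_{i+1})). Then there exist weight structures d, m : X × X → [0,∞], each satisfying axioms (0), (s) and (Σ), such that Δ_*(d ⊔ m) ≠ Δ_*(d) ⊔ Δ_*(m), where ⊔ denotes pointwise supremum. Consequently Δ_* does not preserve binary joins. -/

import Mathlib

open scoped ENNReal

/-- Axiom (0). -/
def Ax0 {X : Type*} (d : X × X → ℝ≥0∞) : Prop := ∀ x : X, d (x, x) = 0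

/-- Axiom (s). -/
def AxSep {X : Type*} (d : X × X → ℝ≥0∞) : Prop :=
  ∀ x y : X, d (x, y) = 0 → d (y, x) = 0 → x = y

/-- Axiom (Σ). -/
def AxSym {X : Type*} (d : X × X → ℝ≥0∞) : Prop := ∀ x y : X, d (x, y) = d (y, x)

/-- `Δ_*`: the greatest weight structure below `p` satisfying (0) and (Δ), given by the
infimum over all finite paths `x = γ 0, …, γ n = y` (`n ≥ 1`) of `Σ_{i<n} p(γ i, γ (i+1))`. -/
noncomputable def deltaStar {X : Type*} (p : X × X → ℝ≥0∞) : X × X → ℝ≥0∞ :=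
  fun q =>
    ⨅ (n : ℕ) (_ : 1 ≤ n) (γ : Fin (n + 1) → X) (_ : γ 0 = q.1) (_ : γ (Fin.last n) = q.2),
      ∑ i : Fin n, p (γ i.castSucc, γ i.succ)

/-!
For a graph `G`, let adjacent vertices have weight `1` and distinct non-adjacent ones weight `∞`.
Then `Δ_*` turns these weights into the path distance of `G`, while the join of the weights of `G`
and `H` is the weight of `G ⊓ H`. The graph with the single edge `xz` and its complement, which
contains `xy` and `yz`, both connect `x` to `z`, but they have no edge in common.
-/

/-- Axiom (Δ), the triangle inequality. -/
def AxTri {X : Type*} (d : X × X → ℝ≥0∞) : Prop := ∀ x y z : X, d (x, z) ≤ d (x, y) + d (y, z)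

section DeltaStar

variable {X : Type*} {p q : X × X → ℝ≥0∞}

lemma deltaStar_le_sum {n : ℕ} (hn : 1 ≤ n) (γ : Fin (n + 1) → X) :
    deltaStar p (γ 0, γ (Fin.last n)) ≤ ∑ i : Fin n, p (γ i.castSucc, γ i.succ) :=
  iInf₂_le_of_le n hn <| iInf_le_of_le γ <| iInf₂_le_of_le rfl rfl le_rfl

lemma deltaStar_le_self : deltaStar p ≤ p := fun (a, b) => by
  simpa using deltaStar_le_sum (p := p) le_rfl ![a, b]

lemma deltaStar_le_add (a b c : X) : deltaStar p (a, c) ≤ p (a, b) + deltaStar p (b, c) := by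
  conv_rhs => simp only [deltaStar, ENNReal.add_iInf]
  simp only [le_iInf_iff]
  rintro n - γ rfl rfl
  simpa [Fin.sum_univ_succ] using
    deltaStar_le_sum (p := p) (Nat.le_add_left 1 n) (Fin.cons a γ : Fin (n + 2) → X)

lemma AxTri.le_sum (hq : AxTri q) {n : ℕ} (hn : 1 ≤ n) (γ : Fin (n + 1) → X) :
    q (γ 0, γ (Fin.last n)) ≤ ∑ i : Fin n, q (γ i.castSucc, γ i.succ) := by
  induction n, hn using Nat.le_induction with
  | base => simp
  | succ n _ ih =>
    rw [Fin.sum_univ_castSucc]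
    exact (hq _ (γ (Fin.last n).castSucc) _).trans (add_le_add_left (ih (γ ∘ Fin.castSucc)) _)

lemma AxTri.le_deltaStar (hq : AxTri q) (hqp : q ≤ p) : q ≤ deltaStar p := by
  rintro ⟨a, b⟩
  simp only [deltaStar, le_iInf_iff]
  rintro n hn γ rfl rfl
  exact (hq.le_sum hn γ).trans (Finset.sum_le_sum fun _ _ => hqp _)

end DeltaStar

open Classical in
/-- The weight structure of a graph: adjacent vertices have weight `1` and distinct non-adjacent
vertices weight `∞`. -/
noncomputable def graphWeight {X : Type*} (G : SimpleGraph X) : X × X → ℝ≥0∞ :=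
  fun q => if q.1 = q.2 then 0 else if G.Adj q.1 q.2 then 1 else ⊤

section GraphWeight

variable {X : Type*} (G H : SimpleGraph X)

lemma ax0_graphWeight : Ax0 (graphWeight G) := fun a => by simp [graphWeight]

lemma axSep_graphWeight : AxSep (graphWeight G) := fun a b h _ => by
  by_contra hab
  by_cases hG : G.Adj a b <;> simp [graphWeight, hab, hG] at h

lemma axSym_graphWeight : AxSym (graphWeight G) := fun a b => by
  simp only [graphWeight]
  rw [@eq_comm _ a b, G.adj_comm a b]

variable {G} in
lemma graphWeight_of_adj {a b : X} (h : G.Adj a b) : graphWeight G (a, b) = 1 := by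
  simp [graphWeight, h, h.ne]

lemma graphWeight_sup_graphWeight : graphWeight G ⊔ graphWeight H = graphWeight (G ⊓ H) := by
  ext ⟨a, b⟩
  by_cases hab : a = b <;> by_cases hG : G.Adj a b <;> by_cases hH : H.Adj a b <;>
    simp [graphWeight, hab, hG, hH]

lemma edist_le_graphWeight (a b : X) : (G.edist a b : ℝ≥0∞) ≤ graphWeight G (a, b) := by
  obtain rfl | hab := eq_or_ne a b
  · simp
  by_cases h : G.Adj a b
  · simp [graphWeight_of_adj h, SimpleGraph.edist_eq_one_iff_adj.2 h]
  · simp [graphWeight, hab, h]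

lemma axTri_edist : AxTri fun q : X × X => (G.edist q.1 q.2 : ℝ≥0∞) := fun u v w => by
  rw [← ENat.toENNReal_add, ENat.toENNReal_le]
  exact SimpleGraph.edist_triangle

variable {G} in
lemma deltaStar_graphWeight_le_length {a b : X} (w : G.Walk a b) :
    deltaStar (graphWeight G) (a, b) ≤ w.length := by
  induction w with
  | nil => exact (deltaStar_le_self _).trans_eq (by simp [ax0_graphWeight G _])
  | @cons a b c h w ih =>
    calc deltaStar (graphWeight G) (a, c)
        ≤ graphWeight G (a, b) + deltaStar (graphWeight G) (b, c) := deltaStar_le_add a b c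
      _ ≤ 1 + w.length := add_le_add (graphWeight_of_adj h).le ih
      _ = (w.cons h).length := by simp [add_comm]

lemma deltaStar_graphWeight (a b : X) : deltaStar (graphWeight G) (a, b) = G.edist a b := by
  apply le_antisymm
  · by_cases h : G.Reachable a b
    · obtain ⟨w, hw⟩ := h.exists_walk_length_eq_edist
      simpa [← hw] using deltaStar_graphWeight_le_length w
    · simp [SimpleGraph.edist_eq_top_of_not_reachable h]
  · exact (axTri_edist G).le_deltaStar (fun q => edist_le_graphWeight G q.1 q.2) (a, b)

end GraphWeight

/-- On a set with three distinct elements there exist weight structures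
`d, m` satisfying (0), (s), (Σ) with `Δ_*(d ⊔ m) ≠ Δ_*(d) ⊔ Δ_*(m)`; hence `Δ_*` does
not preserve binary joins. -/
theorem stmt6 (X : Type*) (x y z : X) (hxy : x ≠ y) (hxz : x ≠ z) (hyz : y ≠ z) :
    ∃ d m : X × X → ℝ≥0∞,
      (Ax0 d ∧ AxSep d ∧ AxSym d) ∧ (Ax0 m ∧ AxSep m ∧ AxSym m) ∧
      deltaStar (d ⊔ m) ≠ deltaStar d ⊔ deltaStar m := by
  let G := SimpleGraph.edge x z
  refine ⟨graphWeight G, graphWeight Gᶜ,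
    ⟨ax0_graphWeight _, axSep_graphWeight _, axSym_graphWeight _⟩,
    ⟨ax0_graphWeight _, axSep_graphWeight _, axSym_graphWeight _⟩, fun h => ?_⟩
  have hxz_adj : G.Adj x z := by simp [G, SimpleGraph.edge_adj, hxz]
  have hxy_adj : Gᶜ.Adj x y := by simp [G, SimpleGraph.edge_adj, hxy, hxz, hyz]
  have hyz_adj : Gᶜ.Adj y z := by simp [G, SimpleGraph.edge_adj, hxy.symm, hyz]
  have hG : G.edist x z ≠ ⊤ := SimpleGraph.edist_ne_top_iff_reachable.2 hxz_adj.reachable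
  have hGc : Gᶜ.edist x z ≠ ⊤ :=
    SimpleGraph.edist_ne_top_iff_reachable.2 (hxy_adj.reachable.trans hyz_adj.reachable)
  have hdist : ⊤ = (G.edist x z : ℝ≥0∞) ⊔ (Gᶜ.edist x z : ℝ≥0∞) := by
    simpa only [graphWeight_sup_graphWeight, inf_compl_eq_bot, Pi.sup_apply, deltaStar_graphWeight,
      SimpleGraph.edist_bot_of_ne hxz, ENat.toENNReal_top] using congrFun h (x, z)
  exact max_ne_top (ENat.toENNReal_ne_top.2 hG) (ENat.toENNReal_ne_top.2 hGc) hdist.symm
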